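/- Let x₁, x₂, y₁, y₂ be positive real numbers, and let i ∈ ℂ be the imaginary unit. The ℚ-vector subspace of ℂ (viewed as a ℚ-vector space) spanned by the four complex numbers x₁, x₂, y₁·i, y₂·i has dimension 2 if and only if both x₁/x₂ and y₁/y₂ are rational numbers. -/

import Mathlib

open Complex

/-- For positive reals x₁, x₂, y₁, y₂, the ℚ-span of {x₁, x₂, y₁·i, y₂·i} in ℂ is
two-dimensional iff x₁/x₂ and y₁/y₂ are both rational. -/
theorem span_dim_two_iff_ratios_rational (x₁ x₂ y₁ y₂ : ℝ)
    (hx₁ : 0 < x₁) (hx₂ : 0 < x₂) (hy₁ : 0 < y₁) (hy₂ : 0 < y₂) :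
    Module.finrank ℚ
        ↥(Submodule.span ℚ ({(x₁ : ℂ), (x₂ : ℂ), (y₁ : ℂ) * Complex.I,
          (y₂ : ℂ) * Complex.I} : Set ℂ)) = 2 ↔
      (∃ q : ℚ, x₁ / x₂ = (q : ℝ)) ∧ (∃ q : ℚ, y₁ / y₂ = (q : ℝ)) := by
  have hli : LinearIndependent ℚ ![(x₂ : ℂ), (y₂ : ℂ) * Complex.I] := by
    rw [LinearIndependent.pair_iff]
    intro s t h
    rw [Rat.smul_def, Rat.smul_def] at h
    have h1 := congrArg Complex.re h
    have h2 := congrArg Complex.im h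
    simp at h1 h2
    exact ⟨h1.resolve_right hx₂.ne', h2.resolve_right hy₂.ne'⟩
  have hW := finrank_span_eq_card hli
  have hr : Set.range ![(x₂ : ℂ), (y₂ : ℂ) * Complex.I] = {(x₂ : ℂ), (y₂ : ℂ) * Complex.I} := by
    simp [Set.pair_comm]
  rw [hr, Fintype.card_fin] at hW
  have hle : Submodule.span ℚ ({(x₂ : ℂ), (y₂ : ℂ) * Complex.I} : Set ℂ) ≤
      Submodule.span ℚ ({(x₁ : ℂ), (x₂ : ℂ), (y₁ : ℂ) * Complex.I,
          (y₂ : ℂ) * Complex.I} : Set ℂ) := by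
    apply Submodule.span_mono
    rintro z (rfl | rfl) <;> simp
  constructor
  · intro hV
    haveI : FiniteDimensional ℚ (Submodule.span ℚ ({(x₁ : ℂ), (x₂ : ℂ), (y₁ : ℂ) * Complex.I,
          (y₂ : ℂ) * Complex.I} : Set ℂ)) :=
      FiniteDimensional.span_of_finite ℚ (Set.toFinite _)
    have heq := Submodule.eq_of_le_of_finrank_eq hle (hW.trans hV.symm)
    have m1 : (x₁ : ℂ) ∈ Submodule.span ℚ ({(x₂ : ℂ), (y₂ : ℂ) * Complex.I} : Set ℂ) := by
      rw [heq]; exact Submodule.subset_span (by simp)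
    have m2 : (y₁ : ℂ) * Complex.I ∈
        Submodule.span ℚ ({(x₂ : ℂ), (y₂ : ℂ) * Complex.I} : Set ℂ) := by
      rw [heq]; exact Submodule.subset_span (by simp)
    obtain ⟨a, b, h1⟩ := Submodule.mem_span_pair.1 m1
    obtain ⟨c, d, h2⟩ := Submodule.mem_span_pair.1 m2
    rw [Rat.smul_def, Rat.smul_def] at h1 h2
    have h1 := congrArg Complex.re h1
    have h2 := congrArg Complex.im h2
    simp at h1 h2
    exact ⟨⟨a, by rw [← h1]; field_simp⟩, ⟨d, by rw [← h2]; field_simp⟩⟩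
  · rintro ⟨⟨a, ha⟩, ⟨d, hd⟩⟩
    rw [div_eq_iff hx₂.ne'] at ha
    rw [div_eq_iff hy₂.ne'] at hd
    refine Eq.trans ?_ hW
    rw [le_antisymm _ hle]
    rw [Submodule.span_le]
    rintro z (rfl | rfl | rfl | rfl)
    · refine Submodule.mem_span_pair.2 ⟨a, 0, ?_⟩
      rw [ha, Rat.smul_def]; simp
    · exact Submodule.subset_span (by simp)
    · refine Submodule.mem_span_pair.2 ⟨0, d, ?_⟩
      rw [hd, Rat.smul_def d]; simp [mul_assoc]
    · exact Submodule.subset_span (by simp)
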